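/- Suppose m = t(d+1) + α with t ≥ 1 and 1 ≤ α ≤ d. Then the matching μ on the face poset of Ind(G_m^d) has exactly one critical cell, namely {b_1, b_{j_1}, b_{i_2}, b_{j_2}, …, b_{i_t}, b_{j_t}, b_{1+t(d+1)}} with j_1 = d − α + 2, i_r = 1 + (r−1)(d+1), and j_r = j_1 + (r−1)(d+1); this cell has cardinality 2t + 1. -/

import Mathlib

open Finset

/-- The graph `G_m^d` on vertex set `Fin m ⊕ Fin m` (0-based indexing):
`Sum.inl i` is the vertex `a_{i+1}` and `Sum.inr j` is the vertex `b_{j+1}` of the paper;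
`a_i` is adjacent to `b_j` iff `(j - i) mod m ∈ {0, …, d-1}`. -/
def Gmd (m d : ℕ) : SimpleGraph (Fin m ⊕ Fin m) :=
  SimpleGraph.fromRel (fun u v =>
    ∃ i j : Fin m, u = Sum.inl i ∧ v = Sum.inr j ∧ (j.val + m - i.val) % m < d)

/-- A finite set of vertices is independent iff no two of its elements are adjacent. -/
def IsInd (m d : ℕ) (σ : Finset (Fin m ⊕ Fin m)) : Prop :=
  ∀ u ∈ σ, ∀ v ∈ σ, ¬ (Gmd m d).Adj u v

/-- The face poset `P` of the independence complex `Ind (G_m^d)` (ordered by `⊆`),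
including the empty simplex. -/
def faceP (m d : ℕ) : Set (Finset (Fin m ⊕ Fin m)) := {σ | IsInd m d σ}

/-- One step of the matching construction: `S_x(T) = {σ ∈ T | x ∉ σ, σ ∪ {x} ∈ T}`. -/
def stepS {α : Type*} [DecidableEq α] (x : α) (T : Set (Finset α)) : Set (Finset α) :=
  {σ | σ ∈ T ∧ x ∉ σ ∧ insert x σ ∈ T}

/-- The survivors of one step: `T \ (S_x(T) ∪ μ_x(S_x(T)))`. -/
def stepSurv {α : Type*} [DecidableEq α] (x : α) (T : Set (Finset α)) : Set (Finset α) :=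
  T \ (stepS x T ∪ (insert x) '' (stepS x T))

/-- Iterating the matching construction along a list of vertices. -/
def phase {α : Type*} [DecidableEq α] (T : Set (Finset α)) (l : List α) : Set (Finset α) :=
  l.foldl (fun T x => stepSurv x T) T

/-- The list `a_1, …, a_m`. -/
def listA (m : ℕ) : List (Fin m ⊕ Fin m) := (List.finRange m).map Sum.inl
/-- The list `b_1, …, b_m`. -/
def listB (m : ℕ) : List (Fin m ⊕ Fin m) := (List.finRange m).map Sum.inr

/-- `S_{a_{i+1}}` (0-based `i`): the set matched with `a_{i+1}` at stage `i+1` of phase one. -/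
def Sa (m d : ℕ) (i : Fin m) : Set (Finset (Fin m ⊕ Fin m)) :=
  stepS (Sum.inl i) (phase (faceP m d) ((listA m).take i.val))

/-- `M = P \ (S_1 ∪ μ_1(S_1))`, the simplices surviving phase one. -/
def setM (m d : ℕ) : Set (Finset (Fin m ⊕ Fin m)) := phase (faceP m d) (listA m)

/-- `S_{b_{i+1}}` (0-based `i`): the set matched with `b_{i+1}` at stage `i+1` of phase two. -/
def Sb (m d : ℕ) (i : Fin m) : Set (Finset (Fin m ⊕ Fin m)) :=
  stepS (Sum.inr i) (phase (setM m d) ((listB m).take i.val))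

/-- `𝒮_{a_{i+1}} = S_{a_{i+1}} ∪ μ_{a_{i+1}}(S_{a_{i+1}})`. -/
def scriptSa (m d : ℕ) (i : Fin m) : Set (Finset (Fin m ⊕ Fin m)) :=
  Sa m d i ∪ (insert (Sum.inl i)) '' (Sa m d i)

/-- `𝒮_{b_{i+1}} = S_{b_{i+1}} ∪ μ_{b_{i+1}}(S_{b_{i+1}})`. -/
def scriptSb (m d : ℕ) (i : Fin m) : Set (Finset (Fin m ⊕ Fin m)) :=
  Sb m d i ∪ (insert (Sum.inr i)) '' (Sb m d i)

/-- The critical cells `C = P \ (S ∪ μ(S))`. -/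
def setC (m d : ℕ) : Set (Finset (Fin m ⊕ Fin m)) :=
  faceP m d \ ((⋃ i : Fin m, scriptSa m d i) ∪ (⋃ i : Fin m, scriptSb m d i))

/-- The matching relation: `MatchRel σ τ` iff `τ = μ(σ)` for `σ ∈ S = S_1 ∪ S_2`. -/
def MatchRel (m d : ℕ) (σ τ : Finset (Fin m ⊕ Fin m)) : Prop :=
  (∃ i : Fin m, σ ∈ Sa m d i ∧ τ = insert (Sum.inl i) σ) ∨
  (∃ i : Fin m, σ ∈ Sb m d i ∧ τ = insert (Sum.inr i) σ)

/-- `B_{s+1} = {b_{s+1}, b_{s+2}, …, b_{s+m-d}}` (0-based `s`, subscripts mod `m`). -/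
def Bset (m d : ℕ) (s : Fin m) : Finset (Fin m ⊕ Fin m) :=
  (Finset.univ.filter (fun j : Fin m => (j.val + m - s.val) % m < m - d)).image Sum.inr

/-- `b_{n+1} ∈ σ` (0-based subscript `n`). -/
def hasB (m : ℕ) (σ : Finset (Fin m ⊕ Fin m)) (n : ℕ) : Prop :=
  ∃ j : Fin m, j.val = n ∧ Sum.inr j ∈ σ

/-- `σ ⊆ B`. -/
def onlyB (m : ℕ) (σ : Finset (Fin m ⊕ Fin m)) : Prop :=
  ∀ v ∈ σ, ∃ j : Fin m, v = Sum.inr j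

/-- Property `P_l` of the paper, with parameter `j1` (0-based: the paper's `j_1 - 1`, so
`1 ≤ j1 ≤ d`).  With 0-based subscripts `i_r = (r-1)(d+1)`, `j_r = j1 + (r-1)(d+1)` and
`k = m + j1 - (d+1)`:  σ ∈ M, σ ⊆ B, the `2l` smallest subscripts of σ are exactly
`0 = i_1, j_1, i_2, j_2, …, i_l, j_l`, the largest subscript is `k`, and
`σ \ {b_{i_r}} ∉ M`, `σ \ {b_{j_r}} ∉ M` for all `1 ≤ r ≤ l`. -/
def propP (m d l j1 : ℕ) (σ : Finset (Fin m ⊕ Fin m)) : Prop :=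
  σ ∈ setM m d ∧ onlyB m σ ∧ 1 ≤ j1 ∧ j1 ≤ d ∧
  (∀ r, 1 ≤ r → r ≤ l → hasB m σ ((r-1)*(d+1)) ∧ hasB m σ (j1 + (r-1)*(d+1))) ∧
  (∀ j : Fin m, Sum.inr j ∈ σ → j.val ≤ j1 + (l-1)*(d+1) →
      ∃ r, 1 ≤ r ∧ r ≤ l ∧ (j.val = (r-1)*(d+1) ∨ j.val = j1 + (r-1)*(d+1))) ∧
  hasB m σ (m + j1 - (d+1)) ∧
  (∀ j : Fin m, Sum.inr j ∈ σ → j.val ≤ m + j1 - (d+1)) ∧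
  (∀ r, 1 ≤ r → r ≤ l → ∀ j : Fin m,
      (j.val = (r-1)*(d+1) ∨ j.val = j1 + (r-1)*(d+1)) → σ.erase (Sum.inr j) ∉ setM m d)

/-! ### The element matching, abstractly -/

theorem mem_stepSurv {α : Type*} [DecidableEq α] (x : α) (T : Set (Finset α)) (σ : Finset α) :
    σ ∈ stepSurv x T ↔ σ ∈ T ∧ (x ∈ σ → σ.erase x ∉ T) ∧ (x ∉ σ → insert x σ ∉ T) := by
  unfold stepSurv stepS
  constructor
  · rintro ⟨h1, h2⟩
    refine ⟨h1, fun hx he => h2 (Or.inr ⟨σ.erase x, ⟨he, by simp, ?_⟩, ?_⟩),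
      fun hx he => h2 (Or.inl ⟨h1, hx, he⟩)⟩
    · rwa [Finset.insert_erase hx]
    · exact Finset.insert_erase hx
  · rintro ⟨h1, h2, h3⟩
    refine ⟨h1, ?_⟩
    rintro (⟨_, hx, he⟩ | ⟨τ, ⟨ht, hx, _⟩, rfl⟩)
    · exact h3 hx he
    · apply h2 (by simp)
      rwa [Finset.erase_insert hx]

theorem phase_snoc {α : Type*} [DecidableEq α] (T : Set (Finset α)) (l : List α) (x : α) :
    phase T (l ++ [x]) = stepSurv x (phase T l) := by
  simp [phase]

theorem listA_take (m k : ℕ) (hk : k < m) :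
    (listA m).take (k+1) = (listA m).take k ++ [Sum.inl ⟨k, hk⟩] := by
  rw [List.take_add_one]
  simp [listA, hk]

theorem listB_take (m k : ℕ) (hk : k < m) :
    (listB m).take (k+1) = (listB m).take k ++ [Sum.inr ⟨k, hk⟩] := by
  rw [List.take_add_one]
  simp [listB, hk]

theorem listA_all (m : ℕ) : (listA m).take m = listA m := by
  apply List.take_of_length_le; simp [listA]

theorem listB_all (m : ℕ) : (listB m).take m = listB m := by
  apply List.take_of_length_le; simp [listB]

theorem phaseA_iff (m d k : ℕ) (hk : k ≤ m) (σ : Finset (Fin m ⊕ Fin m)) :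
    σ ∈ phase (faceP m d) ((listA m).take k) ↔
      σ ∈ faceP m d ∧ ∀ i : Fin m, i.val < k → σ ∉ scriptSa m d i := by
  induction k with
  | zero => simp [phase]
  | succ k ih =>
    rw [listA_take m k hk, phase_snoc]
    have e : stepSurv (Sum.inl ⟨k, hk⟩) (phase (faceP m d) ((listA m).take k)) =
      phase (faceP m d) ((listA m).take k) \ scriptSa m d ⟨k, hk⟩ := rfl
    rw [e, Set.mem_diff, ih (by omega)]
    constructor
    · rintro ⟨⟨h1, h2⟩, h3⟩
      refine ⟨h1, fun i hi => ?_⟩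
      rcases Nat.lt_succ_iff_lt_or_eq.mp hi with h | h
      · exact h2 i h
      · have : i = ⟨k, hk⟩ := Fin.ext h
        rwa [this]
    · rintro ⟨h1, h2⟩
      exact ⟨⟨h1, fun i hi => h2 i (by omega)⟩, h2 _ (by simp)⟩

theorem phaseB_iff (m d k : ℕ) (hk : k ≤ m) (σ : Finset (Fin m ⊕ Fin m)) :
    σ ∈ phase (setM m d) ((listB m).take k) ↔
      σ ∈ setM m d ∧ ∀ i : Fin m, i.val < k → σ ∉ scriptSb m d i := by
  induction k with
  | zero => simp [phase]
  | succ k ih =>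
    rw [listB_take m k hk, phase_snoc]
    have e : stepSurv (Sum.inr ⟨k, hk⟩) (phase (setM m d) ((listB m).take k)) =
      phase (setM m d) ((listB m).take k) \ scriptSb m d ⟨k, hk⟩ := rfl
    rw [e, Set.mem_diff, ih (by omega)]
    constructor
    · rintro ⟨⟨h1, h2⟩, h3⟩
      refine ⟨h1, fun i hi => ?_⟩
      rcases Nat.lt_succ_iff_lt_or_eq.mp hi with h | h
      · exact h2 i h
      · have : i = ⟨k, hk⟩ := Fin.ext h
        rwa [this]
    · rintro ⟨h1, h2⟩
      exact ⟨⟨h1, fun i hi => h2 i (by omega)⟩, h2 _ (by simp)⟩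

theorem setC_eq (m d : ℕ) : setC m d = phase (setM m d) ((listB m).take m) := by
  ext σ
  rw [phaseB_iff m d m le_rfl, setM, ← listA_all, phaseA_iff m d m le_rfl]
  simp only [setC, Set.mem_diff, Set.mem_union, Set.mem_iUnion, not_or, not_exists]
  constructor
  · rintro ⟨h1, h2, h3⟩
    exact ⟨⟨h1, fun i _ => h2 i⟩, fun i _ => h3 i⟩
  · rintro ⟨⟨h1, h2⟩, h3⟩
    exact ⟨h1, fun i => h2 i i.2, fun i => h3 i i.2⟩

/-! ### Phase one -/

theorem isInd_iff (m d : ℕ) (σ : Finset (Fin m ⊕ Fin m)) :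
    IsInd m d σ ↔ ∀ i j : Fin m, Sum.inl i ∈ σ → Sum.inr j ∈ σ →
      ¬ (j.val + m - i.val) % m < d := by
  unfold IsInd Gmd
  constructor
  · intro h i j hi hj hlt
    apply h _ hi _ hj
    rw [SimpleGraph.fromRel_adj]
    exact ⟨by simp, Or.inl ⟨i, j, rfl, rfl, hlt⟩⟩
  · intro h u hu v hv hadj
    rw [SimpleGraph.fromRel_adj] at hadj
    rcases hadj with ⟨_, ⟨i, j, rfl, rfl, hlt⟩ | ⟨i, j, rfl, rfl, hlt⟩⟩
    · exact h i j hu hv hlt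
    · exact h i j hv hu hlt

def Blocked (m d : ℕ) (σ : Finset (Fin m ⊕ Fin m)) (i : Fin m) : Prop :=
  ∃ j : Fin m, Sum.inr j ∈ σ ∧ (j.val + m - i.val) % m < d

theorem phaseA_char (m d k : ℕ) (hk : k ≤ m) (σ : Finset (Fin m ⊕ Fin m)) :
    σ ∈ phase (faceP m d) ((listA m).take k) ↔
      IsInd m d σ ∧ ∀ i : Fin m, i.val < k → Blocked m d σ i := by
  induction k generalizing σ with
  | zero => simp [phase, faceP]
  | succ k ih =>
    rw [listA_take m k hk, phase_snoc, mem_stepSurv]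
    have ih' := ih (by omega)
    rw [ih', ih', ih']
    constructor
    · rintro ⟨⟨h1, h2⟩, h3, h4⟩
      refine ⟨h1, fun i hi => ?_⟩
      rcases Nat.lt_succ_iff_lt_or_eq.mp hi with h | h
      · exact h2 i h
      · have hi' : i = ⟨k, hk⟩ := Fin.ext h
        subst hi'
        by_cases hx : (Sum.inl ⟨k, hk⟩ : Fin m ⊕ Fin m) ∈ σ
        · exfalso
          apply h3 hx
          refine ⟨?_, fun i hi => ?_⟩
          · rw [isInd_iff] at h1 ⊢
            intro i j hi hj
            exact h1 i j (Finset.mem_of_mem_erase hi) (Finset.mem_of_mem_erase hj)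
          · obtain ⟨j, hj, hlt⟩ := h2 i hi
            exact ⟨j, by simp [hj], hlt⟩
        · by_contra hb
          apply h4 hx
          refine ⟨?_, fun i hi => ?_⟩
          · rw [isInd_iff] at h1 ⊢
            intro i j hi hj hlt
            simp only [Finset.mem_insert, Sum.inl.injEq, reduceCtorEq, false_or] at hi hj
            rcases hi with hi | hi
            · subst hi
              exact hb ⟨j, hj, hlt⟩
            · exact h1 i j hi hj hlt
          · obtain ⟨j, hj, hlt⟩ := h2 i hi
            exact ⟨j, by simp [hj], hlt⟩
    · rintro ⟨h1, h2⟩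
      obtain ⟨j, hj, hlt⟩ := h2 ⟨k, hk⟩ (by simp)
      refine ⟨⟨h1, fun i hi => h2 i (by omega)⟩, fun hx => ?_, fun hx hI => ?_⟩
      · exact absurd hlt ((isInd_iff m d σ).1 h1 _ _ hx hj)
      · exact (isInd_iff m d _).1 hI.1 ⟨k, hk⟩ j (by simp) (by simp [hj]) hlt

theorem setM_char (m d : ℕ) (σ : Finset (Fin m ⊕ Fin m)) :
    σ ∈ setM m d ↔ onlyB m σ ∧ ∀ i, Blocked m d σ i := by
  rw [setM, ← listA_all, phaseA_char m d m le_rfl]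
  constructor
  · rintro ⟨h1, h2⟩
    refine ⟨?_, fun i => h2 i i.2⟩
    rintro (i | j) hv
    · obtain ⟨j, hj, hlt⟩ := h2 i i.2
      exact absurd hlt ((isInd_iff m d σ).1 h1 _ _ hv hj)
    · exact ⟨j, rfl⟩
  · rintro ⟨h1, h2⟩
    refine ⟨(isInd_iff m d σ).2 ?_, fun i _ => h2 i⟩
    intro i j hi
    obtain ⟨j, hj⟩ := h1 _ hi
    simp at hj

/-! ### The combinatorial description of the survivors in phase two -/

/-- Residue pattern. -/
def KK (d s n : ℕ) : Prop := n % (d+1) = 0 ∨ n % (d+1) + s = d + 1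

def Core (m d i : ℕ) (X : ℕ → Prop) (p q : ℕ) : Prop :=
  m ≤ q + d ∧
  (∀ x, X x → i ≤ x → x < q → ∃ y, X y ∧ x < y ∧ y ≤ x + d) ∧
  (∀ n, n < i → (X n ↔ KK d (m - q) n)) ∧
  (∃ u, i ≤ u ∧ u ≤ p ∧ KK d (m - q) u ∧ ∀ v, i ≤ v → v ≤ p → KK d (m - q) v → v = u)

def Spec (d t a : ℕ) (X : ℕ → Prop) : Prop := ∀ n, X n ↔ (n ≤ t * (d+1) ∧ KK d a n)

def IsPQ (i : ℕ) (X : ℕ → Prop) (p q : ℕ) : Prop :=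
  X p ∧ X q ∧ i ≤ p ∧ (∀ x, X x → i ≤ x → p ≤ x) ∧ (∀ x, X x → x ≤ q)

def EE (m d t a i : ℕ) (X : ℕ → Prop) : Prop :=
  (∃ p q, IsPQ i X p q ∧ Core m d i X p q) ∨
  ((∀ x, X x → x < i) ∧ t * (d+1) < i ∧ Spec d t a X)

theorem EE_nonempty {m d t a i p q : ℕ} {X : ℕ → Prop} (h : IsPQ i X p q) :
    EE m d t a i X ↔ Core m d i X p q := by
  constructor
  · rintro (⟨p', q', h', hc⟩ | ⟨h', _⟩)
    · have h1 := h.2.2.2.1 p' h'.1 h'.2.2.1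
      have h2 := h'.2.2.2.1 p h.1 h.2.2.1
      have h3 := h.2.2.2.2 q' h'.2.1
      have h4 := h'.2.2.2.2 q h.2.1
      obtain rfl : p = p' := by omega
      obtain rfl : q = q' := by omega
      exact hc
    · have := h' p h.1
      have := h.2.2.1
      omega
  · intro hc
    exact Or.inl ⟨p, q, h, hc⟩

theorem EE_empty {m d t a i : ℕ} {X : ℕ → Prop} (h : ∀ x, X x → x < i) :
    EE m d t a i X ↔ (t * (d+1) < i ∧ Spec d t a X) := by
  constructor
  · rintro (⟨p', q', h', hc⟩ | ⟨_, h'⟩)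
    · have := h p' h'.1
      have := h'.2.2.1
      omega
    · exact h'
  · intro hc
    exact Or.inr ⟨h, hc⟩

theorem exists_PQ {m i : ℕ} {X : ℕ → Prop} (hX : ∀ x, X x → x < m) (h : ∃ x, X x ∧ i ≤ x) :
    ∃ p q, IsPQ i X p q := by
  classical
  obtain ⟨x, hx, hix⟩ := h
  have hp : ∃ x, X x ∧ i ≤ x := ⟨x, hx, hix⟩
  have hq : ∃ y, X y ∧ ∀ z, X z → z ≤ y := by
    refine ⟨Nat.findGreatest X m, Nat.findGreatest_spec (hX x hx).le hx, fun z hz => ?_⟩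
    exact Nat.le_findGreatest (hX z hz).le hz
  obtain ⟨q, hq1, hq2⟩ := hq
  refine ⟨Nat.find hp, q, (Nat.find_spec hp).1, hq1, (Nat.find_spec hp).2, ?_, hq2⟩
  intro x hx hix
  exact Nat.find_min' hp ⟨hx, hix⟩

theorem mod_add_small (d i e : ℕ) (he : e ≤ d) :
    ((i + e) % (d+1) = i % (d+1) + e ∧ i % (d+1) + e < d + 1) ∨
    ((i + e) % (d+1) + (d+1) = i % (d+1) + e ∧ d + 1 ≤ i % (d+1) + e) := by
  have hi : i % (d+1) < d + 1 := Nat.mod_lt _ (by omega)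
  have hee : e % (d+1) = e := Nat.mod_eq_of_lt (by omega)
  rw [Nat.add_mod, hee]
  rcases Nat.lt_or_ge (i % (d+1) + e) (d+1) with h | h
  · left; exact ⟨Nat.mod_eq_of_lt h, h⟩
  · right
    rw [Nat.mod_eq_sub_mod h, Nat.mod_eq_of_lt (by omega)]
    omega

theorem KK_period (d s n : ℕ) : KK d s (n + (d+1)) ↔ KK d s n := by
  simp [KK]

theorem KK_next {d s i : ℕ} (h1 : 1 ≤ s) (h2 : s ≤ d) (hi : KK d s i) :
    ∃ u, i < u ∧ u ≤ i + d ∧ KK d s u ∧ ∀ v, i < v → v ≤ i + d → KK d s v → v = u := by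
  have hlt : i % (d+1) < d + 1 := Nat.mod_lt _ (by omega)
  have key : ∀ e0, 1 ≤ e0 → e0 ≤ d →
      (∀ e, 1 ≤ e → e ≤ d → (KK d s (i + e) ↔ e = e0)) →
      ∃ u, i < u ∧ u ≤ i + d ∧ KK d s u ∧ ∀ v, i < v → v ≤ i + d → KK d s v → v = u := by
    intro e0 ha hb H
    refine ⟨i + e0, by omega, by omega, (H e0 ha hb).2 rfl, fun v hv1 hv2 hk => ?_⟩
    obtain ⟨e, rfl⟩ : ∃ e, v = i + e := ⟨v - i, by omega⟩
    rw [(H e (by omega) (by omega)).1 hk]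
  rcases hi with hi | hi
  · apply key (d + 1 - s) (by omega) (by omega)
    intro e he1 he2
    unfold KK
    rcases mod_add_small d i e he2 with ⟨h, h'⟩ | ⟨h, h'⟩ <;> omega
  · apply key s (by omega) (by omega)
    intro e he1 he2
    unfold KK
    rcases mod_add_small d i e he2 with ⟨h, h'⟩ | ⟨h, h'⟩ <;> omega

/-- Step, when something above `i` is present. -/
theorem EE_step_nonempty {m d t a i : ℕ} {X : ℕ → Prop} (hX : ∀ x, X x → x < m)
    {p q : ℕ} (h : IsPQ (i+1) X p q) :
    EE m d t a (i+1) X ↔ EE m d t a i X ∧ (X i → ¬ EE m d t a i (fun n => n ≠ i ∧ X n)) ∧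
      (¬ X i → ¬ EE m d t a i (fun n => n = i ∨ X n)) := by
  have hpq := h
  obtain ⟨hp, hq, hip, hmin, hmax⟩ := h
  have hqm := hX q hq
  have hpq' := hmax p hp
  rw [EE_nonempty hpq]
  by_cases hi : X i
  · have e1 : IsPQ i X i q := ⟨hi, hq, le_rfl, fun x _ h => h, hmax⟩
    have e2 : IsPQ i (fun n => n ≠ i ∧ X n) p q :=
      ⟨⟨by omega, hp⟩, ⟨by omega, hq⟩, by omega,
        fun x hx hix => hmin x hx.2 (by have := hx.1; omega), fun x hx => hmax x hx.2⟩
    rw [EE_nonempty e1, EE_nonempty e2]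
    constructor
    · rintro ⟨c1, c2, c3, u, u1, u2, u3, u4⟩
      have hKi : KK d (m - q) i := (c3 i (by omega)).1 hi
      have hpd : p ≤ i + d := by
        by_contra hcon
        obtain ⟨w, w1, w2, w3, _⟩ := KK_next (by omega) (by omega) hKi
        have z1 := u4 w (by omega) (by omega) w3
        have z2 := u4 (i + (d+1)) (by omega) (by omega) ((KK_period _ _ _).2 hKi)
        omega
      refine ⟨⟨c1, ?_, fun n hn => c3 n (by omega), i, le_rfl, le_rfl, hKi, fun v _ _ _ => by omega⟩,
        ?_, fun h => absurd hi h⟩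
      · intro x hx hix hxq
        rcases Nat.eq_or_lt_of_le hix with h | h
        · exact ⟨p, hp, by omega, by omega⟩
        · exact c2 x hx h hxq
      · rintro _ ⟨_, _, _, w, w1, w2, w3, w4⟩
        have z1 := w4 i le_rfl (by omega) hKi
        have z2 := w4 u (by omega) (by omega) u3
        omega
    · rintro ⟨⟨c1, c2, c3, u, u1, u2, u3, u4⟩, n1, _⟩
      have n2 := n1 hi
      obtain rfl : u = i := by omega
      have hpd : p ≤ u + d := by
        obtain ⟨y, y1, y2, y3⟩ := c2 u hi le_rfl (by omega)
        have := hmin y y1 (by omega)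
        omega
      have g2 : ∀ x, X x → u + 1 ≤ x → x < q → ∃ y, X y ∧ x < y ∧ y ≤ x + d :=
        fun x hx hix hxq => c2 x hx (by omega) hxq
      obtain ⟨w, w1, w2, w3, w4⟩ := KK_next (by omega) (by omega) u3
      refine ⟨c1, g2, ?_, w, by omega, ?_, w3, fun v v1 v2 v3 => w4 v (by omega) (by omega) v3⟩
      · intro n hn
        rcases Nat.lt_succ_iff_lt_or_eq.mp hn with h | h
        · exact c3 n h
        · subst h; exact ⟨fun _ => u3, fun _ => hi⟩
      · by_contra hcon
        apply n2
        refine ⟨c1, ?_, ?_, u, le_rfl, by omega, u3, ?_⟩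
        · rintro x ⟨hx, hx'⟩ hix hxq
          obtain ⟨y, y1, y2, y3⟩ := c2 x hx' hix hxq
          exact ⟨y, ⟨by omega, y1⟩, y2, y3⟩
        · intro n hn
          rw [← c3 n hn]
          exact ⟨fun h => h.2, fun h => ⟨by omega, h⟩⟩
        · intro v v1 v2 v3
          by_contra hne
          have := w4 v (by omega) (by omega) v3
          omega
  · have hne : ∀ x, X x → x ≠ i := fun x hx he => hi (he ▸ hx)
    have e1 : IsPQ i X p q := ⟨hp, hq, by omega,
      fun x hx hix => hmin x hx (by have := hne x hx; omega), hmax⟩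
    have e2 : IsPQ i (fun n => n = i ∨ X n) i q :=
      ⟨Or.inl rfl, Or.inr hq, le_rfl, fun x _ h => h, by
        rintro x (rfl | hx)
        · omega
        · exact hmax x hx⟩
    rw [EE_nonempty e1, EE_nonempty e2]
    constructor
    · rintro ⟨c1, c2, c3, u, u1, u2, u3, u4⟩
      have hKi : ¬ KK d (m - q) i := fun h => hi ((c3 i (by omega)).2 h)
      refine ⟨⟨c1, fun x hx hix hxq => c2 x hx (by have := hne x hx; omega) hxq,
        fun n hn => c3 n (by omega), u, by omega, u2, u3, ?_⟩, fun h => absurd h hi, ?_⟩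
      · intro v v1 v2 v3
        refine u4 v ?_ v2 v3
        rcases Nat.eq_or_lt_of_le v1 with h | h
        · subst h; exact absurd v3 hKi
        · exact h
      · rintro _ ⟨_, _, _, w, w1, w2, w3, w4⟩
        obtain rfl : w = i := by omega
        exact hKi w3
    · rintro ⟨⟨c1, c2, c3, u, u1, u2, u3, u4⟩, _, n1⟩
      have n2 := n1 hi
      have hKi : ¬ KK d (m - q) i := by
        intro hKi
        have hpd : p ≤ i + d := by
          by_contra hcon
          have z1 := u4 i le_rfl (by omega) hKi
          have z2 := u4 (i + (d+1)) (by omega) (by omega) ((KK_period _ _ _).2 hKi)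
          omega
        apply n2
        refine ⟨c1, ?_, ?_, i, le_rfl, le_rfl, hKi, fun v _ _ _ => by omega⟩
        · rintro x (rfl | hx) hix hxq
          · exact ⟨p, Or.inr hp, by omega, by omega⟩
          · obtain ⟨y, y1, y2, y3⟩ := c2 x hx hix hxq
            exact ⟨y, Or.inr y1, y2, y3⟩
        · intro n hn
          rw [← c3 n hn]
          exact ⟨fun h => h.resolve_left (by omega), Or.inr⟩
      refine ⟨c1, fun x hx hix hxq => c2 x hx (by omega) hxq, ?_, u, ?_, u2, u3,
        fun v v1 v2 v3 => u4 v (by omega) v2 v3⟩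
      · intro n hn
        rcases Nat.lt_succ_iff_lt_or_eq.mp hn with h | h
        · exact c3 n h
        · subst h; exact ⟨fun h => absurd h hi, fun h => absurd h hKi⟩
      · rcases Nat.eq_or_lt_of_le u1 with h | h
        · subst h; exact absurd u3 hKi
        · exact h

theorem KK_top {m d t a i : ℕ} (ha1 : 1 ≤ a) (ha2 : a ≤ d)
    (hm : m = t * (d + 1) + a) (him : i < m) (hid : m ≤ i + d) (hK : KK d (m - i) i) :
    i = t * (d+1) := by
  have hmm : m % (d+1) = a := by
    rw [hm, Nat.add_comm, Nat.add_mul_mod_self_right]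
    exact Nat.mod_eq_of_lt (by omega)
  have hs := mod_add_small d i (m - i) (by omega)
  have e : i + (m - i) = m := by omega
  rw [e, hmm] at hs
  rcases hK with h | h <;> omega

theorem KK_special (d t s : ℕ) : KK d s (t * (d+1)) := by
  left; simp

/-- Core with top element equal to `i`. -/
theorem Core_top {m d t a i : ℕ} {X : ℕ → Prop} (ha1 : 1 ≤ a) (ha2 : a ≤ d)
    (hm : m = t * (d + 1) + a) (him : i < m) (hi : X i) (hmax : ∀ x, X x → x ≤ i) :
    Core m d i X i i ↔ (i = t * (d+1) ∧ Spec d t a X) := by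
  constructor
  · rintro ⟨c1, c2, c3, u, u1, u2, u3, u4⟩
    obtain rfl : u = i := by omega
    have hu := KK_top ha1 ha2 hm him c1 u3
    refine ⟨hu, ?_⟩
    have ea : m - u = a := by omega
    rw [ea] at c3 u3
    intro n
    rcases Nat.lt_trichotomy n u with h | h | h
    · rw [c3 n h]; exact ⟨fun h => ⟨by omega, h⟩, fun h => h.2⟩
    · subst h; exact ⟨fun _ => ⟨by omega, u3⟩, fun _ => hi⟩
    · constructor
      · intro hn; have := hmax n hn; omega
      · rintro ⟨h1, _⟩; omega
  · rintro ⟨hi', hS⟩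
    have ea : m - i = a := by omega
    refine ⟨by omega, fun x _ _ _ => by omega, ?_, i, le_rfl, le_rfl, ?_, fun v _ _ _ => by omega⟩
    · intro n hn
      rw [ea, hS n]
      exact ⟨fun h => h.2, fun h => ⟨by omega, h⟩⟩
    · rw [hi']; exact KK_special _ _ _

theorem EE_step_empty {m d t a i : ℕ} {X : ℕ → Prop} (ha1 : 1 ≤ a) (ha2 : a ≤ d)
    (hm : m = t * (d + 1) + a) (him : i < m) (h : ∀ x, X x → x < i + 1) :
    EE m d t a (i+1) X ↔ EE m d t a i X ∧ (X i → ¬ EE m d t a i (fun n => n ≠ i ∧ X n)) ∧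
      (¬ X i → ¬ EE m d t a i (fun n => n = i ∨ X n)) := by
  rw [EE_empty h]
  have hmax : ∀ x, X x → x ≤ i := fun x hx => by have := h x hx; omega
  by_cases hi : X i
  · have e1 : IsPQ i X i i := ⟨hi, hi, le_rfl, fun x _ h => h, hmax⟩
    have e2 : ∀ x, (x ≠ i ∧ X x) → x < i := fun x hx => by
      have := hmax x hx.2; have := hx.1; omega
    rw [EE_nonempty e1, EE_empty e2, Core_top ha1 ha2 hm him hi hmax]
    constructor
    · rintro ⟨h1, hS⟩
      have := ((hS i).1 hi).1
      exact ⟨⟨by omega, hS⟩, fun _ h => by omega, fun h => absurd hi h⟩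
    · rintro ⟨⟨h1, hS⟩, _⟩
      exact ⟨by omega, hS⟩
  · have e1 : ∀ x, X x → x < i := fun x hx => by
      have := hmax x hx
      have : x ≠ i := fun he => hi (he ▸ hx)
      omega
    have hmax' : ∀ x, (x = i ∨ X x) → x ≤ i := by
      rintro x (rfl | hx)
      · exact le_rfl
      · exact hmax x hx
    have e2 : IsPQ i (fun n => n = i ∨ X n) i i :=
      ⟨Or.inl rfl, Or.inl rfl, le_rfl, fun x _ h => h, hmax'⟩
    rw [EE_nonempty e2, EE_empty e1, Core_top ha1 ha2 hm him (Or.inl rfl) hmax']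
    constructor
    · rintro ⟨h1, hS⟩
      have : i ≠ t * (d+1) := fun he => hi ((hS i).2 ⟨by omega, he ▸ KK_special _ _ _⟩)
      exact ⟨⟨by omega, hS⟩, fun h => absurd h hi, fun _ h => this h.1⟩
    · rintro ⟨⟨h1, hS⟩, _⟩
      exact ⟨by omega, hS⟩

theorem EE_step {m d t a i : ℕ} {X : ℕ → Prop} (ha1 : 1 ≤ a) (ha2 : a ≤ d)
    (hm : m = t * (d + 1) + a) (him : i < m) (hX : ∀ x, X x → x < m) :
    EE m d t a (i+1) X ↔ EE m d t a i X ∧ (X i → ¬ EE m d t a i (fun n => n ≠ i ∧ X n)) ∧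
      (¬ X i → ¬ EE m d t a i (fun n => n = i ∨ X n)) := by
  by_cases h : ∃ x, X x ∧ i + 1 ≤ x
  · obtain ⟨p, q, hpq⟩ := exists_PQ hX h
    exact EE_step_nonempty hX hpq
  · push Not at h
    exact EE_step_empty ha1 ha2 hm him h

theorem mod_window {m i j : ℕ} (hi : i < m) (hj : j < m) :
    (i ≤ j ∧ (j + m - i) % m = j - i) ∨ (j < i ∧ (j + m - i) % m = j + m - i) := by
  rcases Nat.lt_or_ge j i with h | h
  · right; exact ⟨h, Nat.mod_eq_of_lt (by omega)⟩
  · left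
    refine ⟨h, ?_⟩
    have : j + m - i = (j - i) + m := by omega
    rw [this, Nat.add_mod_right]
    exact Nat.mod_eq_of_lt (by omega)

theorem EE_zero {m d t a : ℕ} {X : ℕ → Prop} (hdm : d < m) (hX : ∀ x, X x → x < m) :
    EE m d t a 0 X ↔ ∀ i, i < m → ∃ j, X j ∧ (j + m - i) % m < d := by
  classical
  by_cases hne : ∃ x, X x ∧ 0 ≤ x
  swap
  · have hno : ∀ x, ¬ X x := fun x hx => hne ⟨x, hx, Nat.zero_le _⟩
    rw [EE_empty (fun x hx => absurd hx (hno x))]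
    constructor
    · rintro ⟨h, _⟩; omega
    · intro h
      obtain ⟨j, hj, _⟩ := h 0 (by omega)
      exact absurd hj (hno j)
  obtain ⟨p, q, hpq⟩ := exists_PQ hX hne
  rw [EE_nonempty hpq]
  obtain ⟨hp, hq, _, hmin, hmax⟩ := hpq
  have hqm := hX q hq
  have hpm := hX p hp
  have hpq := hmax p hp
  have hK0 : KK d (m - q) 0 := by left; simp
  constructor
  · rintro ⟨c1, c2, _, u, u1, u2, u3, u4⟩ i hi
    have hpd : p + m ≤ q + d := by
      by_contra hcon
      have z0 := u4 0 le_rfl (by omega) hK0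
      have z1 := u4 (d + 1 - (m - q)) (by omega) (by omega) (by
        right
        rw [Nat.mod_eq_of_lt (by omega)]
        omega)
      omega
    by_cases hb : ∃ x, X x ∧ x < i
    · obtain ⟨x0, hx0, hx0i⟩ := hb
      have g1 : X (Nat.findGreatest X (i-1)) := Nat.findGreatest_spec (m := x0) (by omega) hx0
      have g2 : Nat.findGreatest X (i-1) ≤ i - 1 := Nat.findGreatest_le _
      have g3 : ∀ y, X y → y < i → y ≤ Nat.findGreatest X (i-1) :=
        fun y hy hyi => Nat.le_findGreatest (by omega) hy
      generalize Nat.findGreatest X (i-1) = x at g1 g2 g3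
      have hxq := hmax x g1
      rcases Nat.eq_or_lt_of_le hxq with h | h
      · refine ⟨p, hp, ?_⟩
        rcases mod_window hi hpm with ⟨_, hh⟩ | ⟨_, hh⟩ <;> omega
      · obtain ⟨y, y1, y2, y3⟩ := c2 x g1 (Nat.zero_le _) h
        refine ⟨y, y1, ?_⟩
        have hyi : i ≤ y := by
          by_contra hcon
          have := g3 y y1 (by omega)
          omega
        rcases mod_window hi (hX y y1) with ⟨_, hh⟩ | ⟨_, hh⟩ <;> omega
    · push Not at hb
      have := hb p hp
      refine ⟨p, hp, ?_⟩
      rcases mod_window hi hpm with ⟨_, hh⟩ | ⟨_, hh⟩ <;> omega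
  · intro H
    have hpd : p + m ≤ q + d := by
      rcases Nat.lt_or_ge (q+1) m with h | h
      · obtain ⟨j, hj, hjd⟩ := H (q+1) h
        have := hmin j hj (Nat.zero_le _)
        have := hmax j hj
        rcases mod_window h (hX j hj) with ⟨_, hh⟩ | ⟨_, hh⟩ <;> omega
      · obtain ⟨j, hj, hjd⟩ := H 0 (by omega)
        have := hmin j hj (Nat.zero_le _)
        rcases mod_window (i := 0) (by omega) (hX j hj) with ⟨_, hh⟩ | ⟨_, hh⟩ <;> omega
    refine ⟨by omega, ?_, fun n hn => by omega, 0, le_rfl, by omega, hK0, ?_⟩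
    · intro x hx _ hxq
      obtain ⟨j, hj, hjd⟩ := H (x+1) (by omega)
      rcases mod_window (i := x+1) (by omega) (hX j hj) with ⟨_, hh⟩ | ⟨_, hh⟩
      · exact ⟨j, hj, by omega, by omega⟩
      · exact ⟨q, hq, by omega, by omega⟩
    · intro v _ hv hK
      unfold KK at hK
      rw [Nat.mod_eq_of_lt (by omega)] at hK
      omega

/-! ### Phase two -/

theorem hasB_lt {m : ℕ} {σ : Finset (Fin m ⊕ Fin m)} : ∀ x, hasB m σ x → x < m := by
  rintro x ⟨j, rfl, _⟩; exact j.2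

theorem hasB_val {m : ℕ} {σ : Finset (Fin m ⊕ Fin m)} (j : Fin m) :
    hasB m σ j.val ↔ Sum.inr j ∈ σ := by
  constructor
  · rintro ⟨j', h, hj⟩
    rwa [← Fin.ext h]
  · intro h; exact ⟨j, rfl, h⟩

theorem hasB_erase {m : ℕ} (σ : Finset (Fin m ⊕ Fin m)) (i : Fin m) :
    hasB m (σ.erase (Sum.inr i)) = fun n => n ≠ i.val ∧ hasB m σ n := by
  funext n
  apply propext
  constructor
  · rintro ⟨j, rfl, hj⟩
    simp only [Finset.mem_erase, ne_eq, Sum.inr.injEq] at hj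
    exact ⟨fun h => hj.1 (Fin.ext h), j, rfl, hj.2⟩
  · rintro ⟨hn, j, rfl, hj⟩
    refine ⟨j, rfl, ?_⟩
    simp only [Finset.mem_erase, ne_eq, Sum.inr.injEq]
    exact ⟨fun h => hn (by rw [h]), hj⟩

theorem hasB_insert {m : ℕ} (σ : Finset (Fin m ⊕ Fin m)) (i : Fin m) :
    hasB m (insert (Sum.inr i) σ) = fun n => n = i.val ∨ hasB m σ n := by
  funext n
  apply propext
  constructor
  · rintro ⟨j, rfl, hj⟩
    simp only [Finset.mem_insert, Sum.inr.injEq] at hj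
    rcases hj with h | h
    · left; rw [h]
    · exact Or.inr ⟨j, rfl, h⟩
  · rintro (rfl | ⟨j, rfl, hj⟩)
    · exact ⟨i, rfl, by simp⟩
    · exact ⟨j, rfl, by simp [hj]⟩

theorem onlyB_erase {m : ℕ} (σ : Finset (Fin m ⊕ Fin m)) (v : Fin m ⊕ Fin m) (h : onlyB m σ) :
    onlyB m (σ.erase v) := fun w hw => h w (Finset.mem_of_mem_erase hw)

theorem onlyB_insert {m : ℕ} (σ : Finset (Fin m ⊕ Fin m)) (i : Fin m) (h : onlyB m σ) :
    onlyB m (insert (Sum.inr i) σ) := by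
  intro w hw
  rcases Finset.mem_insert.1 hw with rfl | hw
  · exact ⟨i, rfl⟩
  · exact h w hw

theorem phaseB_char {m d t a : ℕ} (hd : d < m) (ha1 : 1 ≤ a) (ha2 : a ≤ d)
    (hm : m = t * (d + 1) + a) (k : ℕ) (hk : k ≤ m) (σ : Finset (Fin m ⊕ Fin m)) :
    σ ∈ phase (setM m d) ((listB m).take k) ↔ onlyB m σ ∧ EE m d t a k (hasB m σ) := by
  induction k generalizing σ with
  | zero =>
    simp only [List.take_zero, phase, List.foldl_nil]
    rw [setM_char, EE_zero hd hasB_lt]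
    refine and_congr_right fun _ => ⟨fun h i hi => ?_, fun h i => ?_⟩
    · obtain ⟨j, hj, hlt⟩ := h ⟨i, hi⟩
      exact ⟨j.val, (hasB_val j).2 hj, hlt⟩
    · obtain ⟨j, ⟨j, rfl, hj⟩, hlt⟩ := h i.val i.2
      exact ⟨j, hj, hlt⟩
  | succ k ih =>
    have ih' := ih (by omega)
    rw [listB_take m k hk, phase_snoc, mem_stepSurv, ih', ih', ih', hasB_erase, hasB_insert,
      EE_step ha1 ha2 hm hk hasB_lt, ← hasB_val]
    constructor
    · rintro ⟨⟨h1, h2⟩, h3, h4⟩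
      exact ⟨h1, h2, fun h h' => h3 h ⟨onlyB_erase _ _ h1, h'⟩,
        fun h h' => h4 h ⟨onlyB_insert _ _ h1, h'⟩⟩
    · rintro ⟨h1, h2, h3, h4⟩
      exact ⟨⟨h1, h2⟩, fun h h' => h3 h h'.2, fun h h' => h4 h h'.2⟩

theorem spec_iff {d t a n : ℕ} (ha1 : 1 ≤ a) (ha2 : a ≤ d) :
    (n ≤ t * (d+1) ∧ KK d a n) ↔
      ((∃ r, r ≤ t ∧ n = r * (d + 1)) ∨ (∃ r, r < t ∧ n = (d - a + 1) + r * (d + 1))) := by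
  have hdiv := Nat.div_add_mod n (d+1)
  rw [Nat.mul_comm] at hdiv
  constructor
  · rintro ⟨hn, h | h⟩
    · left
      refine ⟨n / (d+1), ?_, by omega⟩
      have hle : n / (d+1) * (d+1) ≤ t * (d+1) := by omega
      exact le_of_mul_le_mul_right hle (Nat.succ_pos d)
    · right
      refine ⟨n / (d+1), ?_, by omega⟩
      have hlt : n / (d+1) * (d+1) < t * (d+1) := by omega
      exact lt_of_mul_lt_mul_right hlt (Nat.zero_le _)
  · rintro (⟨r, hr, rfl⟩ | ⟨r, hr, rfl⟩)
    · exact ⟨Nat.mul_le_mul_right _ hr, KK_special _ _ _⟩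
    · refine ⟨?_, Or.inr ?_⟩
      · have := Nat.mul_le_mul_right (d+1) (Nat.succ_le_of_lt hr)
        rw [Nat.succ_mul] at this
        omega
      · rw [Nat.add_mul_mod_self_right, Nat.mod_eq_of_lt (by omega)]
        omega

theorem card_spec {d t a : ℕ} (ha1 : 1 ≤ a) (ha2 : a ≤ d) :
    ((Finset.range (t+1)).image (fun r => r * (d+1)) ∪
      (Finset.range t).image (fun r => (d - a + 1) + r * (d+1))).card = 2 * t + 1 := by
  rw [Finset.card_union_of_disjoint, Finset.card_image_of_injective,
    Finset.card_image_of_injective]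
  · simp; omega
  · intro x y h
    exact Nat.eq_of_mul_eq_mul_right (Nat.succ_pos d) (by simpa using h)
  · intro x y h
    exact Nat.eq_of_mul_eq_mul_right (Nat.succ_pos d) h
  · rw [Finset.disjoint_left]
    intro x hx hy
    simp only [Finset.mem_image, Finset.mem_range] at hx hy
    obtain ⟨r, _, rfl⟩ := hx
    obtain ⟨r', _, h⟩ := hy
    have := congrArg (· % (d+1)) h
    simp only [Nat.add_mul_mod_self_right, Nat.mul_mod_left] at this
    rw [Nat.mod_eq_of_lt (by omega)] at this
    omega

/-- 0-based indices: suppose `m = t(d+1) + a` with `t ≥ 1` and `1 ≤ a ≤ d`.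
Then there is exactly one critical cell, namely (with `j1 = d - a + 1`)
`{b_0, b_{j1}, b_{d+1}, b_{j1+(d+1)}, …, b_{(t-1)(d+1)}, b_{j1+(t-1)(d+1)}, b_{t(d+1)}}`,
which has cardinality `2t + 1`. -/
theorem stmt15 (m d t a : ℕ) (hd : 1 ≤ d) (hdm : d ≤ m)
    (ht : 1 ≤ t) (ha1 : 1 ≤ a) (ha2 : a ≤ d) (hm : m = t * (d + 1) + a) :
    (∀ σ : Finset (Fin m ⊕ Fin m), σ ∈ setC m d ↔
      (onlyB m σ ∧
       ∀ j : Fin m, Sum.inr j ∈ σ ↔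
         ((∃ r, r ≤ t ∧ j.val = r * (d + 1)) ∨
          (∃ r, r < t ∧ j.val = (d - a + 1) + r * (d + 1))))) ∧
    (setC m d).ncard = 1 ∧
    (∀ σ ∈ setC m d, σ.card = 2 * t + 1) := by
  classical
  have hdm' : d < m := by
    have := Nat.mul_le_mul_right (d+1) ht
    omega
  have main : ∀ σ : Finset (Fin m ⊕ Fin m), σ ∈ setC m d ↔
      (onlyB m σ ∧
       ∀ j : Fin m, Sum.inr j ∈ σ ↔
         ((∃ r, r ≤ t ∧ j.val = r * (d + 1)) ∨
          (∃ r, r < t ∧ j.val = (d - a + 1) + r * (d + 1)))) := by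
    intro σ
    rw [setC_eq, phaseB_char hdm' ha1 ha2 hm m le_rfl, EE_empty hasB_lt]
    refine and_congr_right fun _ => ⟨?_, fun h => ⟨by omega, fun n => ?_⟩⟩
    · rintro ⟨_, hS⟩ j
      rw [← hasB_val, hS, spec_iff ha1 ha2]
    · by_cases hn : n < m
      · have := h ⟨n, hn⟩
        rw [← hasB_val] at this
        rw [spec_iff ha1 ha2]
        exact this
      · exact ⟨fun h => absurd (hasB_lt n h) hn, fun h => by omega⟩
  refine ⟨main, ?_, ?_⟩
  · rw [Set.ncard_eq_one]
    refine ⟨(Finset.univ.filter (fun j : Fin m => (∃ r, r ≤ t ∧ j.val = r * (d + 1)) ∨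
          (∃ r, r < t ∧ j.val = (d - a + 1) + r * (d + 1)))).image Sum.inr, ?_⟩
    ext σ
    rw [main, Set.mem_singleton_iff]
    constructor
    · rintro ⟨h1, h2⟩
      ext v
      rcases v with i | j
      · simp only [Finset.mem_image, reduceCtorEq, and_false, exists_false, iff_false]
        intro hv
        obtain ⟨j, hj⟩ := h1 _ hv
        simp at hj
      · rw [h2 j]
        simp
    · rintro rfl
      refine ⟨?_, fun j => by simp⟩
      intro v hv
      obtain ⟨j, _, rfl⟩ := Finset.mem_image.1 hv
      exact ⟨j, rfl⟩
  · intro σ hσ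
    obtain ⟨h1, h2⟩ := (main σ).1 hσ
    rw [← card_spec (t := t) ha1 ha2]
    apply Finset.card_bij (fun v _ => Sum.elim Fin.val Fin.val v)
    · intro v hv
      obtain ⟨j, rfl⟩ := h1 v hv
      simp only [Sum.elim_inr, Finset.mem_union, Finset.mem_image, Finset.mem_range]
      rcases (h2 j).1 hv with ⟨r, hr, e⟩ | ⟨r, hr, e⟩
      · exact Or.inl ⟨r, by omega, e.symm⟩
      · exact Or.inr ⟨r, hr, e.symm⟩
    · intro v hv w hw h
      obtain ⟨j, rfl⟩ := h1 v hv
      obtain ⟨j', rfl⟩ := h1 w hw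
      simp only [Sum.elim_inr] at h
      rw [Fin.ext h]
    · intro n hn
      have hn' : (∃ r, r ≤ t ∧ n = r * (d + 1)) ∨
          (∃ r, r < t ∧ n = (d - a + 1) + r * (d + 1)) := by
        simp only [Finset.mem_union, Finset.mem_image, Finset.mem_range] at hn
        rcases hn with ⟨r, hr, e⟩ | ⟨r, hr, e⟩
        · exact Or.inl ⟨r, by omega, e.symm⟩
        · exact Or.inr ⟨r, hr, e.symm⟩
      have hnm : n < m := by
        have := ((spec_iff ha1 ha2).2 hn').1
        omega
      exact ⟨Sum.inr ⟨n, hnm⟩, (h2 ⟨n, hnm⟩).2 hn', rfl⟩
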